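/- arXiv:2310.17628 — 3 statements merged into one kernel-verified Lean document; each statement's English description precedes it below -/
import Mathlib

section
/- (Berkovich's classification, seminorm form.) Let K be a complete, algebraically closed field with a nontrivial nonarchimedean multiplicative absolute value |·|, and let ‖·‖ : K[y] → ℝ be a multiplicative nonarchimedean seminorm extending |·|, i.e. ‖f·g‖ = ‖f‖·‖g‖, ‖f+g‖ ≤ max(‖f‖, ‖g‖), and ‖c‖ = |c| for every constant c ∈ K. Then there exist sequences (aₙ)ₙ ⊂ K and (rₙ)ₙ ⊂ [0,∞) with |aₙ₊₁ − aₙ| ≤ rₙ and rₙ₊₁ ≤ rₙ for all n, such that for every polynomial f ∈ K[y], ‖f‖ = infₙ ( maxᵢ |cᵢ(aₙ)| rₙⁱ ), where (cᵢ(aₙ))ᵢ are the Taylor coefficients of f about aₙ (when rₙ = 0 this quantity is |f(aₙ)|). -/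
/-- A nonarchimedean multiplicative absolute value on a commutative ring. -/
def IsNAAbsValue {R : Type*} [CommRing R] (v : R → ℝ) : Prop :=
  (∀ x, 0 ≤ v x) ∧ (∀ x, v x = 0 ↔ x = 0) ∧ (∀ x y, v (x * y) = v x * v y) ∧
    (∀ x y, v (x + y) ≤ max (v x) (v y))

/-!
The radius `ρ(a) = ‖y - a‖` is the only datum of the seminorm that matters. By Taylor's formula and
the ultrametric inequality the Gauss norm on the disk `D̄(a, ρ(a))` dominates `‖·‖`. Choose centres
`aₙ` whose radii decrease to `inf ρ`. Then the Gauss norms converge to `‖·‖` on linear factors, as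
the Gauss norm of `y - b` is at most `max (ρ(aₙ)) (ρ(b)) → ρ(b)`, and hence on products of linear
factors, as Gauss norms are submultiplicative whereas `‖·‖` is multiplicative.
-/

open Filter Polynomial
open scoped Topology

section Bundling

variable {A : Type*} [Ring A] {N : A → ℝ}

theorem map_neg_eq_of_map_mul (hnonneg : ∀ x, 0 ≤ N x) (hone : N 1 = 1)
    (hmul : ∀ x y, N (x * y) = N x * N y) (x : A) : N (-x) = N x := by
  have hsq : N (-1) ^ 2 = 1 := by rw [sq, ← hmul, neg_one_mul, neg_neg, hone]
  have hneg_one : N (-1) = 1 := (pow_eq_one_iff_of_nonneg (hnonneg _) two_ne_zero).1 hsq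
  rw [← neg_one_mul, hmul, hneg_one, one_mul]

/-- A multiplicative nonarchimedean seminorm given as a bare function, bundled as a
`MulRingSeminorm`. The condition `N 1 ≠ 0` excludes the zero function. -/
def mulRingSeminormOfIsNonarchimedean (N : A → ℝ) (hzero : N 0 = 0) (hone : N 1 ≠ 0)
    (hnonneg : ∀ x, 0 ≤ N x) (hmul : ∀ x y, N (x * y) = N x * N y) (hadd : IsNonarchimedean N) :
    MulRingSeminorm A :=
  have hone' : N 1 = 1 := (mul_eq_left₀ hone).1 (by rw [← hmul, one_mul])
  { toFun := N
    map_zero' := hzero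
    add_le' := fun _ _ ↦ hadd.add_le hnonneg
    neg' := map_neg_eq_of_map_mul hnonneg hone' hmul
    map_one' := hone'
    map_mul' := hmul }

end Bundling

section GaussNorm

variable {R F : Type*} [CommRing R] [FunLike F R ℝ] {v : F} {r : ℝ}

/-- The Gauss norm of `f` on the closed disk `D̄(a, r)`: the largest `v (cᵢ) * r ^ i`, where `cᵢ`
are the Taylor coefficients of `f` about `a`. -/
noncomputable def diskGaussNorm (v : F) (a : R) (r : ℝ) (f : R[X]) : ℝ :=
  (taylor a f).gaussNorm v r

theorem diskGaussNorm_C [ZeroHomClass F R ℝ] (a : R) (r : ℝ) (c : R) :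
    diskGaussNorm v a r (C c) = v c := by
  rw [diskGaussNorm, taylor_C, gaussNorm_C]

variable [ZeroHomClass F R ℝ] [NonnegHomClass F R ℝ]

theorem diskGaussNorm_eq_iSup (hr : 0 ≤ r) (a : R) (f : R[X]) :
    diskGaussNorm v a r f = ⨆ i : ℕ, v ((taylor a f).coeff i) * r ^ i := by
  simp only [diskGaussNorm, ← gaussNorm_coe_powerSeries v _ hr, PowerSeries.gaussNorm_eq, coeff_coe]

theorem diskGaussNorm_mul_le [MulHomClass F R ℝ] (hv : IsNonarchimedean v) (hr : 0 ≤ r) (a : R)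
    (f g : R[X]) :
    diskGaussNorm v a r (f * g) ≤ diskGaussNorm v a r f * diskGaussNorm v a r g := by
  simpa only [diskGaussNorm, taylor_mul] using gaussNorm_mul_le v hv _ _ hr

theorem diskGaussNorm_X_sub_C_le [OneHomClass F R ℝ] (hv : IsNonarchimedean v) (hr : 0 ≤ r)
    (a b : R) : diskGaussNorm v a r (X - C b) ≤ max r (v (a - b)) := by
  have htaylor : taylor a (X - C b) = X + C (a - b) := by
    rw [map_sub, taylor_X, taylor_C, C_sub, add_sub_assoc]
  have hX : (X : R[X]).gaussNorm v r = r := by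
    rw [← monomial_one_one_eq_X, gaussNorm_monomial, map_one, one_mul, pow_one]
  calc diskGaussNorm v a r (X - C b)
      = (X + C (a - b)).gaussNorm v r := by rw [diskGaussNorm, htaylor]
    _ ≤ max ((X : R[X]).gaussNorm v r) ((C (a - b)).gaussNorm v r) :=
        isNonarchimedean_gaussNorm v hv hr _ _
    _ = max r (v (a - b)) := by rw [hX, gaussNorm_C]

end GaussNorm

section Radius

variable {R : Type*} [CommRing R] {v : MulRingSeminorm R} {N : MulRingSeminorm R[X]}

/-- The radius at `a` of a multiplicative seminorm `N` on `R[X]`: the Berkovich point `N` lies in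
the closed disk `D̄(a, r)` exactly when its radius at `a` is at most `r`. -/
noncomputable def seminormRadius (N : MulRingSeminorm R[X]) (a : R) : ℝ := N (X - C a)

theorem seminormRadius_nonneg (N : MulRingSeminorm R[X]) (a : R) : 0 ≤ seminormRadius N a :=
  apply_nonneg N _

theorem bddBelow_range_seminormRadius (N : MulRingSeminorm R[X]) :
    BddBelow (Set.range (seminormRadius N)) :=
  ⟨0, Set.forall_mem_range.2 (seminormRadius_nonneg N)⟩

theorem exists_antitone_tendsto_iInf_seminormRadius (N : MulRingSeminorm R[X]) :
    ∃ a : ℕ → R, Antitone (fun n ↦ seminormRadius N (a n)) ∧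
      Tendsto (fun n ↦ seminormRadius N (a n)) atTop (𝓝 (⨅ b, seminormRadius N b)) := by
  obtain ⟨r, hanti, htendsto, hmem⟩ :=
    exists_seq_tendsto_sInf (Set.range_nonempty _) (bddBelow_range_seminormRadius N)
  choose a ha using hmem
  obtain rfl : (fun n ↦ seminormRadius N (a n)) = r := funext ha
  exact ⟨a, hanti, htendsto⟩

theorem isNonarchimedean_of_map_C (hN : IsNonarchimedean N) (hC : ∀ c, N (C c) = v c) :
    IsNonarchimedean v := fun c d ↦ by
  simpa only [← hC, C_add] using hN (C c) (C d)

theorem map_sub_le_max_seminormRadius (hN : IsNonarchimedean N) (hC : ∀ c, N (C c) = v c)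
    (a b : R) : v (a - b) ≤ max (seminormRadius N a) (seminormRadius N b) := by
  have hsub : C (a - b) = (X - C b) + -(X - C a) := by rw [C_sub]; ring
  calc v (a - b) = N ((X - C b) + -(X - C a)) := by rw [← hC, hsub]
    _ ≤ max (N (X - C b)) (N (-(X - C a))) := hN _ _
    _ = max (seminormRadius N a) (seminormRadius N b) := by
        rw [map_neg_eq_map, max_comm, seminormRadius, seminormRadius]

theorem le_diskGaussNorm_seminormRadius (hN : IsNonarchimedean N) (hC : ∀ c, N (C c) = v c)
    (a : R) (f : R[X]) : N f ≤ diskGaussNorm v a (seminormRadius N a) f := by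
  obtain ⟨i, -, hi⟩ := hN.finset_image_add (map_zero N) (apply_nonneg N)
    (fun i ↦ C ((taylor a f).coeff i) * (X - C a) ^ i) (taylor a f).support
  calc N f = N ((taylor a f).sum fun i c ↦ C c * (X - C a) ^ i) := by rw [sum_taylor_eq]
    _ ≤ N (C ((taylor a f).coeff i) * (X - C a) ^ i) := hi
    _ = v ((taylor a f).coeff i) * seminormRadius N a ^ i := by
        rw [map_mul, map_pow, hC, seminormRadius]
    _ ≤ diskGaussNorm v a (seminormRadius N a) f :=
        le_gaussNorm v _ (seminormRadius_nonneg N a) i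

section Tendsto

variable {ι : Type*} {l : Filter ι} {a : ι → R}

theorem tendsto_diskGaussNorm_X_sub_C (hN : IsNonarchimedean N) (hC : ∀ c, N (C c) = v c)
    (ha : Tendsto (fun n ↦ seminormRadius N (a n)) l (𝓝 (⨅ b, seminormRadius N b))) (b : R) :
    Tendsto (fun n ↦ diskGaussNorm v (a n) (seminormRadius N (a n)) (X - C b)) l
      (𝓝 (N (X - C b))) := by
  have hmax : Tendsto (fun n ↦ max (seminormRadius N (a n)) (seminormRadius N b)) l
      (𝓝 (seminormRadius N b)) := by
    simpa only [max_eq_right (ciInf_le (bddBelow_range_seminormRadius N) b)] using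
      ha.max (tendsto_const_nhds (x := seminormRadius N b))
  refine tendsto_of_tendsto_of_tendsto_of_le_of_le tendsto_const_nhds hmax
    (fun n ↦ le_diskGaussNorm_seminormRadius hN hC (a n) _) fun n ↦ ?_
  calc diskGaussNorm v (a n) (seminormRadius N (a n)) (X - C b)
      ≤ max (seminormRadius N (a n)) (v (a n - b)) :=
        diskGaussNorm_X_sub_C_le (isNonarchimedean_of_map_C hN hC) (seminormRadius_nonneg N _) _ _
    _ ≤ max (seminormRadius N (a n)) (seminormRadius N b) :=
        max_le (le_max_left _ _) (map_sub_le_max_seminormRadius hN hC _ _)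

theorem tendsto_diskGaussNorm_mul (hN : IsNonarchimedean N) (hC : ∀ c, N (C c) = v c) {f g : R[X]}
    (hf : Tendsto (fun n ↦ diskGaussNorm v (a n) (seminormRadius N (a n)) f) l (𝓝 (N f)))
    (hg : Tendsto (fun n ↦ diskGaussNorm v (a n) (seminormRadius N (a n)) g) l (𝓝 (N g))) :
    Tendsto (fun n ↦ diskGaussNorm v (a n) (seminormRadius N (a n)) (f * g)) l
      (𝓝 (N (f * g))) := by
  have hfg := hf.mul hg
  rw [← map_mul] at hfg
  exact tendsto_of_tendsto_of_tendsto_of_le_of_le tendsto_const_nhds hfg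
    (fun n ↦ le_diskGaussNorm_seminormRadius hN hC (a n) _)
    fun n ↦ diskGaussNorm_mul_le (isNonarchimedean_of_map_C hN hC) (seminormRadius_nonneg N _) _ _ _

theorem tendsto_diskGaussNorm_of_splits (hN : IsNonarchimedean N) (hC : ∀ c, N (C c) = v c)
    (ha : Tendsto (fun n ↦ seminormRadius N (a n)) l (𝓝 (⨅ b, seminormRadius N b)))
    {f : R[X]} (hf : f.Splits) :
    Tendsto (fun n ↦ diskGaussNorm v (a n) (seminormRadius N (a n)) f) l (𝓝 (N f)) := by
  have hconst (c : R) :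
      Tendsto (fun n ↦ diskGaussNorm v (a n) (seminormRadius N (a n)) (C c)) l (𝓝 (N (C c))) := by
    simpa only [diskGaussNorm_C, hC] using tendsto_const_nhds
  induction hf using Submonoid.closure_induction with
  | mem f hf =>
    obtain ⟨c, rfl⟩ | ⟨b, rfl⟩ := hf
    · exact hconst c
    · simpa only [C_neg, sub_neg_eq_add] using tendsto_diskGaussNorm_X_sub_C hN hC ha (-b)
  | one => simpa only [C_1] using hconst 1
  | mul f g _ _ hf hg => exact tendsto_diskGaussNorm_mul hN hC hf hg

theorem isGLB_range_diskGaussNorm_of_splits [l.NeBot] (hN : IsNonarchimedean N)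
    (hC : ∀ c, N (C c) = v c)
    (ha : Tendsto (fun n ↦ seminormRadius N (a n)) l (𝓝 (⨅ b, seminormRadius N b)))
    {f : R[X]} (hf : f.Splits) :
    IsGLB (Set.range fun n ↦ diskGaussNorm v (a n) (seminormRadius N (a n)) f) (N f) :=
  ⟨Set.forall_mem_range.2 fun n ↦ le_diskGaussNorm_seminormRadius hN hC (a n) f,
    fun _ hb ↦ ge_of_tendsto' (tendsto_diskGaussNorm_of_splits hN hC ha hf)
      (Set.forall_mem_range.1 hb)⟩

end Tendsto

end Radius

theorem stmt10_general {R : Type*} [CommRing R] (v : MulRingSeminorm R) (N : MulRingSeminorm R[X])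
    (hN : IsNonarchimedean N) (hC : ∀ c, N (C c) = v c) :
    ∃ (a : ℕ → R) (r : ℕ → ℝ), (∀ n, 0 ≤ r n) ∧
      (∀ n, v (a (n + 1) - a n) ≤ r n) ∧ (∀ n, r (n + 1) ≤ r n) ∧
      ∀ f : R[X], f.Splits →
        N f = ⨅ n : ℕ, ⨆ i : ℕ, v ((taylor (a n) f).coeff i) * r n ^ i := by
  obtain ⟨a, hanti, htendsto⟩ := exists_antitone_tendsto_iInf_seminormRadius N
  have hradius (n : ℕ) : 0 ≤ seminormRadius N (a n) := seminormRadius_nonneg N (a n)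
  have hstep (n : ℕ) : seminormRadius N (a (n + 1)) ≤ seminormRadius N (a n) := hanti n.le_succ
  refine ⟨a, fun n ↦ seminormRadius N (a n), hradius, fun n ↦ ?_, hstep, fun f hf ↦ ?_⟩
  · exact (map_sub_le_max_seminormRadius hN hC _ _).trans (max_le (hstep n) le_rfl)
  · simpa only [diskGaussNorm_eq_iSup (hradius _)] using
      (isGLB_range_diskGaussNorm_of_splits hN hC htendsto hf).ciInf_eq.symm

/-- Berkovich's classification (seminorm form): over a complete, algebraically closed field
with a nontrivial nonarchimedean multiplicative absolute value, every multiplicative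
nonarchimedean seminorm on `K[y]` extending `|·|` is the infimum of Gauss norms along a
nested sequence of closed disks `D̄(aₙ, rₙ)` (with `rₙ ≥ 0`, `|aₙ₊₁ − aₙ| ≤ rₙ`,
`rₙ₊₁ ≤ rₙ`). -/
theorem stmt10 {K : Type*} [Field K] [IsAlgClosed K] (abv : K → ℝ) (habv : IsNAAbsValue abv)
    (hnontriv : ∃ x : K, abv x ≠ 0 ∧ abv x ≠ 1)
    (hcomplete : ∀ x : ℕ → K,
      (∀ ε : ℝ, 0 < ε → ∃ N : ℕ, ∀ m ≥ N, ∀ n ≥ N, abv (x m - x n) < ε) →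
      ∃ l : K, ∀ ε : ℝ, 0 < ε → ∃ N : ℕ, ∀ n ≥ N, abv (x n - l) < ε)
    (nrm : Polynomial K → ℝ)
    (hnn : ∀ f, 0 ≤ nrm f)
    (hmul : ∀ f g, nrm (f * g) = nrm f * nrm g)
    (hadd : ∀ f g, nrm (f + g) ≤ max (nrm f) (nrm g))
    (hC : ∀ c : K, nrm (Polynomial.C c) = abv c) :
    ∃ (a : ℕ → K) (r : ℕ → ℝ), (∀ n, 0 ≤ r n) ∧
      (∀ n, abv (a (n + 1) - a n) ≤ r n) ∧ (∀ n, r (n + 1) ≤ r n) ∧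
      ∀ f : Polynomial K,
        nrm f = ⨅ n : ℕ, ⨆ i : ℕ, abv ((Polynomial.taylor (a n) f).coeff i) * r n ^ i := by
  have hzero : abv 0 = 0 := (habv.2.1 0).2 rfl
  have hone : abv 1 ≠ 0 := mt (habv.2.1 1).1 one_ne_zero
  let v := mulRingSeminormOfIsNonarchimedean abv hzero hone habv.1 habv.2.2.1 habv.2.2.2
  let N := mulRingSeminormOfIsNonarchimedean nrm (by rw [← C_0, hC, hzero]) (by rwa [← C_1, hC])
    hnn hmul hadd
  obtain ⟨a, r, hr, hdist, hanti, hinf⟩ := stmt10_general v N hadd hC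
  exact ⟨a, r, hr, hdist, hanti, fun f ↦ hinf f (IsAlgClosed.splits f)⟩
end

section
/- Let K be a complete, algebraically closed field with a nonarchimedean multiplicative absolute value |·|. Let a ∈ K, r > 0, and let (cₙ)ₙ ⊂ K satisfy |cₙ| rⁿ → 0, so that f(b) := Σₙ cₙ (b−a)ⁿ converges for every b in the closed disk D̄(a,r). Suppose cₙ ≠ 0 for some n ≥ 1, and let d be the largest index n ≥ 1 such that |cₙ| rⁿ = max_{m ≥ 1} |c_m| r^m (the Weierstrass degree of f − c₀ on D̄(a,r)). Then the image of the closed disk is again a closed disk: f(D̄(a,r)) = D̄(c₀, |c_d|·r^d). -/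
/-!
After replacing `f` by `f - y` one has to find a zero of `f` in the disk `D̄(0, r)` when the
constant term does not exceed the dominant term `c_d X^d`. By submultiplicativity of the Gauss
norm, a root `β` of least norm of a split polynomial `Q` satisfies `‖Q_n‖ ‖β‖ⁿ ≤ ‖Q_0‖` for every
`n`. Recentring at a point `x` of the disk leaves the norm of the `d`-th coefficient unchanged,
because `d` is the *last* dominant index, so a truncation `P` of `f` has a root `α` in the disk
with `‖α - x‖ᵈ ‖c_d‖ ≤ ‖P(x)‖`. Starting from a root of one truncation, this gives a nearby root of
the next one, at a distance tending to `0`. In a complete ultrametric field the resulting sequence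
converges, and by uniform convergence its limit is a zero of `f`.
-/

open Filter Metric Topology
open Polynomial (X C)
open PowerSeries (coeff)
open scoped Polynomial PowerSeries

section Roots

variable {K : Type*} [NormedField K] [IsUltrametricDist K] {Q : K[X]}

theorem gaussNorm_X_sub_C_le {ρ : ℝ} (hρ : 0 ≤ ρ) {β : K} (hβ : ρ ≤ ‖β‖) :
    (X - C β).gaussNorm (NormedField.toAbsoluteValue K) ρ ≤ ‖β‖ := by
  set v := NormedField.toAbsoluteValue K
  have hX : (X : K[X]).gaussNorm v ρ = ρ := by
    rw [← Polynomial.monomial_one_one_eq_X, Polynomial.gaussNorm_monomial, map_one, one_mul,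
      pow_one]
  have hC : (C (-β)).gaussNorm v ρ = ‖β‖ :=
    (Polynomial.gaussNorm_C v ρ (-β)).trans (norm_neg β)
  have hadd := Polynomial.isNonarchimedean_gaussNorm v
    IsUltrametricDist.isNonarchimedean_norm hρ X (C (-β))
  rwa [hX, hC, max_eq_right hβ, map_neg, ← sub_eq_add_neg] at hadd

theorem gaussNorm_le_norm_coeff_zero (hQ : Q.Splits) {ρ : ℝ} (hρ : 0 ≤ ρ)
    (hroots : ∀ β ∈ Q.roots, ρ ≤ ‖β‖) :
    Q.gaussNorm (NormedField.toAbsoluteValue K) ρ ≤ ‖Q.coeff 0‖ := by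
  set v := NormedField.toAbsoluteValue K
  have hmul (p q : K[X]) (hp : p.gaussNorm v ρ ≤ ‖p.coeff 0‖)
      (hq : q.gaussNorm v ρ ≤ ‖q.coeff 0‖) : (p * q).gaussNorm v ρ ≤ ‖(p * q).coeff 0‖ := by
    rw [Polynomial.mul_coeff_zero, norm_mul]
    refine (Polynomial.gaussNorm_mul_le v IsUltrametricDist.isNonarchimedean_norm p q hρ).trans ?_
    gcongr
    exact q.gaussNorm_nonneg v hρ
  have hC (a : K) : (C a).gaussNorm v ρ ≤ ‖(C a).coeff 0‖ := by
    rw [Polynomial.gaussNorm_C, Polynomial.coeff_C_zero]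
    rfl
  rw [hQ.eq_prod_roots]
  refine hmul _ _ (hC _) (Multiset.prod_induction _ _ hmul (hC 1) fun p hp => ?_)
  obtain ⟨β, hβ, rfl⟩ := Multiset.mem_map.1 hp
  simpa using gaussNorm_X_sub_C_le hρ (hroots β hβ)

theorem exists_isRoot_forall_norm_coeff_mul_pow_le (hQ : Q.Splits) (hdeg : Q.natDegree ≠ 0) :
    ∃ β, Q.IsRoot β ∧ ∀ n, ‖Q.coeff n‖ * ‖β‖ ^ n ≤ ‖Q.coeff 0‖ := by
  classical
  have hne : Q.roots.toFinset.Nonempty := by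
    simpa using hQ.roots_ne_zero hdeg
  obtain ⟨β, hβ, hmin⟩ := Q.roots.toFinset.exists_min_image (‖·‖) hne
  simp only [Multiset.mem_toFinset] at hβ hmin
  exact ⟨β, Polynomial.isRoot_of_mem_roots hβ, fun n =>
    (Q.le_gaussNorm (NormedField.toAbsoluteValue K) (norm_nonneg β) n).trans
      (gaussNorm_le_norm_coeff_zero hQ (norm_nonneg β) hmin)⟩

end Roots

theorem norm_coeff_taylor_eq {K : Type*} [NormedField K] [IsUltrametricDist K] {P : K[X]} {r : ℝ}
    (hr : 0 < r) {d : ℕ} (hlt : ∀ m, d < m → ‖P.coeff m‖ * r ^ m < ‖P.coeff d‖ * r ^ d) {x : K}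
    (hx : ‖x‖ ≤ r) :
    ‖(P.taylor x).coeff d‖ = ‖P.coeff d‖ := by
  have hterm (i : ℕ) (hi : i ≠ 0) :
      ‖((i + d).choose d : K) * P.coeff (i + d) * x ^ i‖ < ‖P.coeff d‖ := by
    have hdom : ‖P.coeff (i + d)‖ * r ^ i < ‖P.coeff d‖ := by
      have h := hlt (i + d) (by lia)
      rw [pow_add, ← mul_assoc] at h
      exact lt_of_mul_lt_mul_right h (by positivity)
    calc ‖((i + d).choose d : K) * P.coeff (i + d) * x ^ i‖
        = ‖((i + d).choose d : K)‖ * ‖P.coeff (i + d)‖ * ‖x‖ ^ i := by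
          rw [norm_mul, norm_mul, norm_pow]
      _ ≤ 1 * ‖P.coeff (i + d)‖ * r ^ i := by
          gcongr
          exact IsUltrametricDist.norm_natCast_le_one K _
      _ < ‖P.coeff d‖ := by rwa [one_mul]
  rw [Polynomial.taylor_coeff, Polynomial.eval_eq_sum_range]
  simp only [Polynomial.hasseDeriv_coeff]
  rw [IsUltrametricDist.isNonarchimedean_norm.apply_sum_eq_of_lt (fun a => (norm_neg a).symm)
    (Finset.mem_range.2 (Nat.succ_pos _))]
  · simp
  · intro i _ hi
    simpa using hterm i hi

/-- The index `d` is the Weierstrass degree of `f` on the closed disk of radius `r`: the largest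
index at which `‖coeff n f‖ * r ^ n` attains its maximum. Polynomials are covered through the
coercion `K[X] → K⟦X⟧`. -/
structure IsWeierstrassDegree {K : Type*} [NormedField K] (f : K⟦X⟧) (r : ℝ) (d : ℕ) : Prop where
  le (m : ℕ) : ‖coeff m f‖ * r ^ m ≤ ‖coeff d f‖ * r ^ d
  lt (m : ℕ) : d < m → ‖coeff m f‖ * r ^ m < ‖coeff d f‖ * r ^ d

namespace IsWeierstrassDegree

variable {K : Type*} [NormedField K] {r : ℝ} {d : ℕ}

theorem coeff_ne_zero {f : K⟦X⟧} (h : IsWeierstrassDegree f r d) (hr : 0 ≤ r) :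
    coeff d f ≠ 0 := by
  intro h0
  have := h.lt (d + 1) d.lt_succ_self
  rw [h0, norm_zero, zero_mul] at this
  exact this.not_ge (by positivity)

theorem trunc {f : K⟦X⟧} (h : IsWeierstrassDegree f r d) (hr : 0 < r) {N : ℕ} (hN : d < N) :
    IsWeierstrassDegree (f.trunc N : K⟦X⟧) r d := by
  have hd : 0 < ‖coeff d f‖ * r ^ d :=
    mul_pos (norm_pos_iff.2 (h.coeff_ne_zero hr.le)) (pow_pos hr d)
  constructor <;> intro m <;>
    simp only [Polynomial.coeff_coe, PowerSeries.coeff_trunc, if_pos hN] <;> split_ifs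
  · exact h.le m
  · simpa using hd.le
  · exact h.lt m
  · simpa using fun _ => hd

theorem sub_C {f : K⟦X⟧} (h : IsWeierstrassDegree (f - PowerSeries.C (coeff 0 f)) r d)
    (hd : d ≠ 0) {y : K} (hy : ‖y - coeff 0 f‖ ≤ ‖coeff d f‖ * r ^ d) :
    IsWeierstrassDegree (f - PowerSeries.C y) r d := by
  have hcoeff (z : K) {m : ℕ} (hm : m ≠ 0) : coeff m (f - PowerSeries.C z) = coeff m f := by
    simp [PowerSeries.coeff_C, hm]
  constructor <;> intro m
  · rcases eq_or_ne m 0 with rfl | hm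
    · rw [hcoeff y hd]
      simpa [norm_sub_rev] using hy
    · simpa only [hcoeff _ hm, hcoeff _ hd] using h.le m
  · intro hm
    simpa only [hcoeff _ (Nat.ne_zero_of_lt hm), hcoeff _ hd] using h.lt m hm

theorem norm_eval_le [IsUltrametricDist K] {P : K[X]} (h : IsWeierstrassDegree (P : K⟦X⟧) r d)
    {x : K} (hx : ‖x‖ ≤ r) : ‖P.eval x‖ ≤ ‖P.coeff d‖ * r ^ d := by
  have hr : 0 ≤ r := (norm_nonneg x).trans hx
  rw [Polynomial.eval_eq_sum_range]
  refine IsUltrametricDist.norm_sum_le_of_forall_le_of_nonneg (by positivity) fun i _ => ?_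
  calc ‖P.coeff i * x ^ i‖ = ‖P.coeff i‖ * ‖x‖ ^ i := by rw [norm_mul, norm_pow]
    _ ≤ ‖P.coeff i‖ * r ^ i := by gcongr
    _ ≤ ‖P.coeff d‖ * r ^ d := by simpa only [Polynomial.coeff_coe] using h.le i

theorem exists_isRoot_norm_sub_pow_mul_le [IsUltrametricDist K] {P : K[X]}
    (h : IsWeierstrassDegree (P : K⟦X⟧) r d) (hP : P.Splits) (hr : 0 < r) (hd : d ≠ 0) {x : K}
    (hx : ‖x‖ ≤ r) : ∃ α, P.IsRoot α ∧ ‖α - x‖ ^ d * ‖P.coeff d‖ ≤ ‖P.eval x‖ := by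
  have hPd : P.coeff d ≠ 0 := by simpa using h.coeff_ne_zero hr.le
  have hdeg : (P.taylor x).natDegree ≠ 0 := by
    rw [Polynomial.natDegree_taylor]
    have := Polynomial.le_natDegree_of_ne_zero hPd
    lia
  have htaylor : ‖(P.taylor x).coeff d‖ = ‖P.coeff d‖ :=
    norm_coeff_taylor_eq hr (by simpa only [Polynomial.coeff_coe] using h.lt) hx
  obtain ⟨β, hβ, hle⟩ := exists_isRoot_forall_norm_coeff_mul_pow_le (hP.taylor x) hdeg
  refine ⟨β + x, ?_, ?_⟩
  · rwa [Polynomial.IsRoot, Polynomial.taylor_eval] at hβ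
  · rw [add_sub_cancel_right, mul_comm, ← htaylor, ← Polynomial.taylor_coeff_zero]
    exact hle d

theorem exists_isRoot_norm_le [IsUltrametricDist K] {P : K[X]}
    (h : IsWeierstrassDegree (P : K⟦X⟧) r d) (hP : P.Splits) (hr : 0 < r) (hd : d ≠ 0) {x : K}
    (hx : ‖x‖ ≤ r) :
    ∃ α, ‖α‖ ≤ r ∧ P.IsRoot α ∧ ‖α - x‖ ^ d * ‖P.coeff d‖ ≤ ‖P.eval x‖ := by
  have hPd : P.coeff d ≠ 0 := by simpa using h.coeff_ne_zero hr.le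
  obtain ⟨α, hα, hαx⟩ := h.exists_isRoot_norm_sub_pow_mul_le hP hr hd hx
  refine ⟨α, ?_, hα, hαx⟩
  have hsub : ‖α - x‖ ≤ r := by
    refine le_of_pow_le_pow_left₀ hd hr.le (le_of_mul_le_mul_right ?_ (norm_pos_iff.2 hPd))
    rw [mul_comm (r ^ d)]
    exact hαx.trans (h.norm_eval_le hx)
  simpa using (IsUltrametricDist.norm_add_le_max (α - x) x).trans (max_le hsub hx)

theorem exists_isRoot_trunc_succ [IsUltrametricDist K] [IsAlgClosed K] {f : K⟦X⟧}
    (h : IsWeierstrassDegree f r d) (hr : 0 < r) (hd : d ≠ 0) {N : ℕ} (hN : d < N) {x : K}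
    (hx : ‖x‖ ≤ r) (hroot : (f.trunc N).IsRoot x) :
    ∃ α, ‖α‖ ≤ r ∧ (f.trunc (N + 1)).IsRoot α ∧
      ‖α - x‖ ^ d * ‖coeff d f‖ ≤ ‖coeff N f‖ * r ^ N := by
  have hN' : d < N + 1 := hN.trans N.lt_succ_self
  obtain ⟨α, hαr, hα, hαx⟩ :=
    (h.trunc hr hN').exists_isRoot_norm_le (IsAlgClosed.splits _) hr hd hx
  have heval : (f.trunc (N + 1)).eval x = coeff N f * x ^ N := by
    rw [PowerSeries.trunc_succ, Polynomial.eval_add, hroot.eq_zero, zero_add,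
      Polynomial.eval_monomial]
  rw [PowerSeries.coeff_trunc, if_pos hN', heval, norm_mul, norm_pow] at hαx
  refine ⟨α, hαr, hα, hαx.trans ?_⟩
  gcongr

theorem exists_seq_isRoot_trunc [IsUltrametricDist K] [IsAlgClosed K] {f : K⟦X⟧}
    (h : IsWeierstrassDegree f r d) (hr : 0 < r) (hd : d ≠ 0) (hf : f.IsRestricted r) :
    ∃ u : ℕ → K, (∀ N, ‖u N‖ ≤ r) ∧ (∀ N, (f.trunc (N + (d + 1))).IsRoot (u N)) ∧
      Tendsto (fun N => u (N + 1) - u N) atTop (𝓝 0) := by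
  let S (N : ℕ) := {x : K // ‖x‖ ≤ r ∧ (f.trunc (N + (d + 1))).IsRoot x}
  have next (N : ℕ) (x : S N) : ∃ x' : S (N + 1),
      ‖x'.1 - x.1‖ ^ d * ‖coeff d f‖ ≤ ‖coeff (N + (d + 1)) f‖ * r ^ (N + (d + 1)) := by
    obtain ⟨α, hαr, hα, hαx⟩ := h.exists_isRoot_trunc_succ hr hd (by lia) x.2.1 x.2.2
    rw [add_right_comm] at hα
    exact ⟨⟨α, hαr, hα⟩, hαx⟩
  choose F hF using next
  obtain ⟨α, hαr, hα, -⟩ := (h.trunc hr (N := 0 + (d + 1)) (by lia)).exists_isRoot_norm_le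
    (IsAlgClosed.splits _) hr hd (x := 0) (norm_zero.trans_le hr.le)
  let u (N : ℕ) : S N := Nat.rec ⟨α, hαr, hα⟩ F N
  refine ⟨fun N => (u N).1, fun N => (u N).2.1, fun N => (u N).2.2, ?_⟩
  have hpow : Tendsto (fun N => ‖(u (N + 1)).1 - (u N).1‖ ^ d) atTop (𝓝 0) := by
    have hbound := (((PowerSeries.isRestricted_iff' r f).1 hf).comp
      (tendsto_add_atTop_nat (d + 1))).div_const ‖coeff d f‖
    rw [zero_div] at hbound
    refine squeeze_zero (fun N => by positivity) (fun N => ?_) hbound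
    exact (le_div_iff₀ (norm_pos_iff.2 (h.coeff_ne_zero hr.le))).2 (hF N (u N))
  rw [tendsto_zero_iff_norm_tendsto_zero]
  simpa [Real.pow_rpow_inv_natCast, hd] using
    hpow.rpow_const (p := (d : ℝ)⁻¹) (Or.inr (by positivity))

end IsWeierstrassDegree

section Evaluation

variable {K : Type*} [NormedField K] [CompleteSpace K] [IsUltrametricDist K] {f : K⟦X⟧} {r : ℝ}

theorem summable_coeff_mul_pow (hf : f.IsRestricted r) {x : K} (hx : ‖x‖ ≤ r) :
    Summable fun n => coeff n f * x ^ n := by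
  refine NonarchimedeanAddGroup.summable_of_tendsto_cofinite_zero ?_
  refine squeeze_zero_norm (fun n => ?_) ((PowerSeries.isRestricted_iff r f).1 hf)
  rw [norm_mul, norm_pow]
  gcongr

theorem tendstoUniformlyOn_eval_trunc (hf : f.IsRestricted r) :
    TendstoUniformlyOn (fun N x => (f.trunc N).eval x) (fun x => ∑' n, coeff n f * x ^ n) atTop
      (closedBall 0 r) := by
  rw [Metric.tendstoUniformlyOn_iff]
  intro ε hε
  have hsmall := ((PowerSeries.isRestricted_iff' r f).1 hf).eventually_lt_const (half_pos hε)
  obtain ⟨N₀, hN₀⟩ := eventually_atTop.1 hsmall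
  filter_upwards [eventually_ge_atTop N₀] with N hN x hx
  rw [mem_closedBall_zero_iff] at hx
  have htail : ∑' n, coeff n f * x ^ n - (f.trunc N).eval x
      = ∑' n, coeff (n + N) f * x ^ (n + N) := by
    rw [Polynomial.eval, PowerSeries.eval₂_trunc_eq_sum_range, sub_eq_iff_eq_add']
    exact ((summable_coeff_mul_pow hf hx).sum_add_tsum_nat_add N).symm
  rw [dist_eq_norm, htail]
  refine lt_of_le_of_lt ?_ (half_lt_self hε)
  refine IsUltrametricDist.norm_tsum_le_of_forall_le_of_nonneg (half_pos hε).le fun n => ?_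
  calc ‖coeff (n + N) f * x ^ (n + N)‖ = ‖coeff (n + N) f‖ * ‖x‖ ^ (n + N) := by
        rw [norm_mul, norm_pow]
    _ ≤ ‖coeff (n + N) f‖ * r ^ (n + N) := by gcongr
    _ ≤ ε / 2 := (hN₀ _ (by lia)).le

theorem continuousOn_tsum_coeff_mul_pow (hf : f.IsRestricted r) :
    ContinuousOn (fun x => ∑' n, coeff n f * x ^ n) (closedBall 0 r) :=
  (tendstoUniformlyOn_eval_trunc hf).continuousOn
    (Frequently.of_forall fun N => (f.trunc N).continuous.continuousOn)

theorem norm_tsum_coeff_mul_pow_sub_le (hf : f.IsRestricted r) {x : K} (hx : ‖x‖ ≤ r) {M : ℝ}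
    (hM : 0 ≤ M) (hle : ∀ n, ‖coeff (n + 1) f‖ * r ^ (n + 1) ≤ M) :
    ‖∑' n, coeff n f * x ^ n - coeff 0 f‖ ≤ M := by
  rw [(summable_coeff_mul_pow hf hx).tsum_eq_zero_add, pow_zero, mul_one, add_sub_cancel_left]
  refine IsUltrametricDist.norm_tsum_le_of_forall_le_of_nonneg hM fun n => ?_
  calc ‖coeff (n + 1) f * x ^ (n + 1)‖ = ‖coeff (n + 1) f‖ * ‖x‖ ^ (n + 1) := by
        rw [norm_mul, norm_pow]
    _ ≤ ‖coeff (n + 1) f‖ * r ^ (n + 1) := by gcongr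
    _ ≤ M := hle n

theorem tsum_coeff_sub_C_mul_pow (hf : f.IsRestricted r) {x : K} (hx : ‖x‖ ≤ r) (y : K) :
    ∑' n, coeff n (f - PowerSeries.C y) * x ^ n = ∑' n, coeff n f * x ^ n - y := by
  have hC : HasSum (fun n => coeff n (PowerSeries.C y : K⟦X⟧) * x ^ n) y := by
    simpa using hasSum_single (f := fun n => coeff n (PowerSeries.C y : K⟦X⟧) * x ^ n) 0
      fun n hn => by rw [PowerSeries.coeff_C, if_neg hn, zero_mul]
  simp_rw [map_sub, sub_mul]
  exact ((summable_coeff_mul_pow hf hx).hasSum.sub hC).tsum_eq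

namespace IsWeierstrassDegree

variable [IsAlgClosed K] {d : ℕ}

theorem exists_tsum_eq_zero (h : IsWeierstrassDegree f r d) (hr : 0 < r) (hd : d ≠ 0)
    (hf : f.IsRestricted r) : ∃ x, ‖x‖ ≤ r ∧ ∑' n, coeff n f * x ^ n = 0 := by
  obtain ⟨u, hur, hroot, hu⟩ := h.exists_seq_isRoot_trunc hr hd hf
  obtain ⟨x, hx⟩ := cauchySeq_tendsto_of_complete
    (NonarchimedeanAddGroup.cauchySeq_of_tendsto_sub_nhds_zero hu)
  have hxr : ‖x‖ ≤ r := le_of_tendsto' hx.norm hur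
  have hx' : Tendsto u atTop (𝓝[closedBall 0 r] x) :=
    tendsto_nhdsWithin_iff.2 ⟨hx, .of_forall fun N => mem_closedBall_zero_iff.2 (hur N)⟩
  have hcont := continuousOn_tsum_coeff_mul_pow hf x (mem_closedBall_zero_iff.2 hxr)
  have hunif : TendstoUniformlyOn (fun N x => (f.trunc (N + (d + 1))).eval x)
      (fun x => ∑' n, coeff n f * x ^ n) atTop (closedBall 0 r) := fun s hs =>
    (tendsto_add_atTop_nat (d + 1)).eventually (tendstoUniformlyOn_eval_trunc hf s hs)
  have heval := hunif.tendsto_comp hcont hx'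
  refine ⟨x, hxr, tendsto_nhds_unique heval ?_⟩
  simpa only [(hroot _).eq_zero] using tendsto_const_nhds

theorem image_closedBall (h : IsWeierstrassDegree (f - PowerSeries.C (coeff 0 f)) r d) (hr : 0 < r)
    (hd : d ≠ 0) (hf : f.IsRestricted r) :
    (fun x => ∑' n, coeff n f * x ^ n) '' closedBall 0 r
      = closedBall (coeff 0 f) (‖coeff d f‖ * r ^ d) := by
  refine Set.Subset.antisymm (Set.image_subset_iff.2 fun x hx => ?_) fun y hy => ?_
  · rw [Set.mem_preimage, mem_closedBall_iff_norm]
    refine norm_tsum_coeff_mul_pow_sub_le hf (mem_closedBall_zero_iff.1 hx) (by positivity)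
      fun n => ?_
    simpa [PowerSeries.coeff_C, hd] using h.le (n + 1)
  · have hy' := h.sub_C hd (mem_closedBall_iff_norm.1 hy)
    have hfy : (f - PowerSeries.C y).IsRestricted r := by
      rw [sub_eq_add_neg]
      exact PowerSeries.isRestricted.add r hf
        (PowerSeries.isRestricted.neg r (PowerSeries.isRestricted_C r y))
    obtain ⟨x, hx, hzero⟩ := hy'.exists_tsum_eq_zero hr hd hfy
    rw [tsum_coeff_sub_C_mul_pow hf hx, sub_eq_zero] at hzero
    exact ⟨x, mem_closedBall_zero_iff.2 hx, hzero⟩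

end IsWeierstrassDegree

end Evaluation

/-- Image of a closed disk under a convergent power series over a complete algebraically
closed nonarchimedean field: if some `cₙ ≠ 0` with `n ≥ 1` and `d` is the largest index
`n ≥ 1` with `‖cₙ‖ rⁿ = max_{m ≥ 1} ‖c_m‖ r^m` (the Weierstrass degree of `f − c₀`),
then `f(D̄(a,r)) = D̄(c₀, ‖c_d‖ r^d)`. -/
theorem stmt16 {K : Type*} [NormedField K] [CompleteSpace K] [IsUltrametricDist K]
    [IsAlgClosed K]
    (a : K) (r : ℝ) (hr : 0 < r) (c : ℕ → K)
    (hc : Filter.Tendsto (fun n => ‖c n‖ * r ^ n) Filter.atTop (nhds 0))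
    (hne : ∃ n : ℕ, 1 ≤ n ∧ c n ≠ 0)
    (d : ℕ) (hd1 : 1 ≤ d)
    (hdmax : ∀ m : ℕ, 1 ≤ m → ‖c m‖ * r ^ m ≤ ‖c d‖ * r ^ d)
    (hdlargest : ∀ m : ℕ, d < m → ‖c m‖ * r ^ m < ‖c d‖ * r ^ d) :
    (fun b : K => ∑' n : ℕ, c n * (b - a) ^ n) '' Metric.closedBall a r
      = Metric.closedBall (c 0) (‖c d‖ * r ^ d) := by
  have hd : d ≠ 0 := Nat.one_le_iff_ne_zero.1 hd1
  have hf : (PowerSeries.mk c).IsRestricted r := by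
    simpa only [PowerSeries.isRestricted_iff', PowerSeries.coeff_mk] using hc
  have hdeg : IsWeierstrassDegree
      (PowerSeries.mk c - PowerSeries.C (coeff 0 (PowerSeries.mk c))) r d := by
    constructor <;> intro m
    · rcases eq_or_ne m 0 with rfl | hm
      · simpa [PowerSeries.coeff_C, hd] using (by positivity : 0 ≤ ‖c d‖ * r ^ d)
      · simpa [PowerSeries.coeff_C, hm, hd] using hdmax m (Nat.one_le_iff_ne_zero.2 hm)
    · intro hm
      simpa [PowerSeries.coeff_C, hd, Nat.ne_zero_of_lt hm] using hdlargest m hm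
  have hshift : (fun b => b - a) '' closedBall a r = closedBall 0 r := by
    simpa only [IsometryEquiv.subRight_apply, sub_self] using
      (IsometryEquiv.subRight a).image_closedBall a r
  simpa only [← hshift, Set.image_image, PowerSeries.coeff_mk] using hdeg.image_closedBall hr hd hf
end

section
/- Let K be an algebraically closed field with a nonarchimedean multiplicative absolute value |·|, let f ∈ K[y] be a nonzero polynomial, let a ∈ K and R > 0, and let (cᵢ) be the Taylor coefficients of f about a. Then the number of roots of f in the closed disk D̄(a,R), counted with multiplicity, equals the largest index d with |c_d| R^d = maxᵢ |cᵢ| Rⁱ; and the number of roots of f in the open disk D(a,R), counted with multiplicity, equals the smallest index d with |c_d| R^d = maxᵢ |cᵢ| Rⁱ. -/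
/-! For a polynomial `p`, call an index dominant at radius `r` if its term `|pᵢ| rⁱ` attains the
Gauss norm of `p`. Since the Gauss norm is multiplicative, a coefficient of `p * q` can only be
dominant if it contains a product of two dominant coefficients, and it is dominant if it contains
exactly one such product. Hence the least, and likewise the greatest, dominant index is additive in
products. For `X - b` both can be read off by comparing `|b|` with `r`, so for a product of linear
factors they count the roots in the open and in the closed disk around `0`; Taylor expansion
moves the centre to `a`. -/

open Polynomial
open scoped Pointwise

section DominantIndices

/-- The indices at which the terms `|pᵢ| rⁱ` of a polynomial `p` attain its Gauss norm. These are
the indices of the monomials that determine the size of `p` on the circle of radius `r`.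
Restricting to the support makes this a finite set, empty for `p = 0`. -/
noncomputable def dominantIndices {A : Type*} [Semiring A] (v : AbsoluteValue A ℝ) (r : ℝ)
    (p : A[X]) : Finset ℕ :=
  {i ∈ p.support | v (p.coeff i) * r ^ i = p.gaussNorm v r}

variable {A : Type*} [Ring A] {v : AbsoluteValue A ℝ} {r : ℝ} {p q : A[X]}

theorem gaussNorm_pos_of_ne_zero (v : AbsoluteValue A ℝ) (hr : 0 < r) (hp : p ≠ 0) :
    0 < p.gaussNorm v r :=
  (p.gaussNorm_nonneg v hr.le).lt_of_ne' <|
    (gaussNorm_eq_zero_iff v p (fun _ ↦ v.eq_zero.1) hr).not.2 hp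

theorem gaussNorm_eq_iSup (hr : 0 ≤ r) : p.gaussNorm v r = ⨆ i, v (p.coeff i) * r ^ i := by
  simp only [← gaussNorm_coe_powerSeries v p hr, PowerSeries.gaussNorm_eq, coeff_coe]

theorem mem_dominantIndices_iff (hr : 0 < r) (hp : p ≠ 0) {i : ℕ} :
    i ∈ dominantIndices v r p ↔ v (p.coeff i) * r ^ i = p.gaussNorm v r := by
  refine ⟨fun h ↦ (Finset.mem_filter.1 h).2, fun h ↦ Finset.mem_filter.2 ⟨?_, h⟩⟩
  rw [mem_support_iff]
  intro h0
  simp only [h0, map_zero, zero_mul] at h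
  exact (gaussNorm_pos_of_ne_zero v hr hp).ne h

theorem coe_dominantIndices_eq_setOf_eq_iSup (hr : 0 < r) (hp : p ≠ 0) :
    (dominantIndices v r p : Set ℕ) =
      {d | v (p.coeff d) * r ^ d = ⨆ i, v (p.coeff i) * r ^ i} := by
  ext d
  rw [Finset.mem_coe, mem_dominantIndices_iff hr hp, gaussNorm_eq_iSup hr.le, Set.mem_ofPred_eq]

theorem ne_zero_of_mem_dominantIndices {i : ℕ} (hi : i ∈ dominantIndices v r p) : p ≠ 0 := by
  rintro rfl
  simp [dominantIndices] at hi

theorem map_coeff_mul_coeff_mul_pow (i j : ℕ) :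
    v (p.coeff i * q.coeff j) * r ^ (i + j) =
      (v (p.coeff i) * r ^ i) * (v (q.coeff j) * r ^ j) := by
  rw [map_mul, pow_add, mul_mul_mul_comm]

theorem map_coeff_mul_coeff_mul_pow_le (hr : 0 ≤ r) (i j : ℕ) :
    v (p.coeff i * q.coeff j) * r ^ (i + j) ≤ p.gaussNorm v r * q.gaussNorm v r := by
  rw [map_coeff_mul_coeff_mul_pow]
  exact mul_le_mul (p.le_gaussNorm v hr i) (q.le_gaussNorm v hr j) (by positivity)
    (p.gaussNorm_nonneg v hr)

theorem map_coeff_mul_coeff_mul_pow_eq_iff (hr : 0 < r) (hp : p ≠ 0) (hq : q ≠ 0) (i j : ℕ) :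
    v (p.coeff i * q.coeff j) * r ^ (i + j) = p.gaussNorm v r * q.gaussNorm v r ↔
      i ∈ dominantIndices v r p ∧ j ∈ dominantIndices v r q := by
  rw [map_coeff_mul_coeff_mul_pow, mem_dominantIndices_iff hr hp, mem_dominantIndices_iff hr hq]
  refine ⟨fun h ↦ ?_, fun ⟨hi, hj⟩ ↦ by rw [hi, hj]⟩
  have hq_pos := gaussNorm_pos_of_ne_zero v hr hq
  have hprod_pos : 0 < (v (p.coeff i) * r ^ i) * (v (q.coeff j) * r ^ j) :=
    h ▸ mul_pos (gaussNorm_pos_of_ne_zero v hr hp) hq_pos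
  have hi_pos : 0 < v (p.coeff i) * r ^ i := pos_of_mul_pos_left hprod_pos (by positivity)
  exact (mul_eq_mul_iff_eq_and_eq_of_pos (p.le_gaussNorm v hr.le i) (q.le_gaussNorm v hr.le j)
    hi_pos hq_pos).1 h

theorem dominantIndices_mul_subset (hna : IsNonarchimedean v) (hr : 0 < r) :
    dominantIndices v r (p * q) ⊆ dominantIndices v r p + dominantIndices v r q := by
  intro k hk
  have hpq : p * q ≠ 0 := ne_zero_of_mem_dominantIndices hk
  have hk_eq := (mem_dominantIndices_iff hr hpq).1 hk
  rw [gaussNorm_mul hna hr, coeff_mul] at hk_eq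
  obtain ⟨⟨i, j⟩, hij, hle⟩ := hna.finset_image_add_of_nonempty
    (fun x : ℕ × ℕ ↦ p.coeff x.1 * q.coeff x.2) (t := Finset.HasAntidiagonal.antidiagonal k)
    ⟨(0, k), by simp⟩
  obtain rfl : i + j = k := Finset.HasAntidiagonal.mem_antidiagonal.1 hij
  have heq : v (p.coeff i * q.coeff j) * r ^ (i + j) = p.gaussNorm v r * q.gaussNorm v r := by
    refine (map_coeff_mul_coeff_mul_pow_le hr.le i j).antisymm ?_
    rw [← hk_eq]
    gcongr
  obtain ⟨hi, hj⟩ := (map_coeff_mul_coeff_mul_pow_eq_iff hr (left_ne_zero_of_mul hpq)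
    (right_ne_zero_of_mul hpq) i j).1 heq
  exact Finset.add_mem_add hi hj

theorem add_mem_dominantIndices_mul (hna : IsNonarchimedean v) (hr : 0 < r) {i j : ℕ}
    (hi : i ∈ dominantIndices v r p) (hj : j ∈ dominantIndices v r q)
    (hij : UniqueAdd (dominantIndices v r p) (dominantIndices v r q) i j) :
    i + j ∈ dominantIndices v r (p * q) := by
  have hp := ne_zero_of_mem_dominantIndices hi
  have hq := ne_zero_of_mem_dominantIndices hj
  have hpq : p * q ≠ 0 := by
    intro h0
    have hpos := mul_pos (gaussNorm_pos_of_ne_zero v hr hp) (gaussNorm_pos_of_ne_zero v hr hq)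
    rw [← gaussNorm_mul hna hr, h0, gaussNorm_zero] at hpos
    exact hpos.false
  have hterm := (map_coeff_mul_coeff_mul_pow_eq_iff hr hp hq i j).2 ⟨hi, hj⟩
  have hlt : ∀ x ∈ Finset.HasAntidiagonal.antidiagonal (i + j), x ≠ (i, j) →
      v (p.coeff x.1 * q.coeff x.2) < v (p.coeff i * q.coeff j) := by
    rintro ⟨i', j'⟩ hx hne
    have hsum : i' + j' = i + j := Finset.HasAntidiagonal.mem_antidiagonal.1 hx
    refine lt_of_mul_lt_mul_right ?_ (pow_nonneg hr.le (i + j))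
    rw [hterm, ← hsum]
    refine (map_coeff_mul_coeff_mul_pow_le hr.le i' j').lt_of_ne fun heq ↦ hne ?_
    obtain ⟨hi', hj'⟩ := (map_coeff_mul_coeff_mul_pow_eq_iff hr hp hq i' j').1 heq
    exact Prod.ext_iff.2 (hij hi' hj' hsum)
  rw [mem_dominantIndices_iff hr hpq, gaussNorm_mul hna hr, coeff_mul,
    hna.apply_sum_eq_of_lt (fun a ↦ (v.map_neg a).symm) (by simp) hlt, hterm]

theorem isLeast_dominantIndices_mul (hna : IsNonarchimedean v) (hr : 0 < r) {m n : ℕ}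
    (hm : IsLeast (dominantIndices v r p : Set ℕ) m)
    (hn : IsLeast (dominantIndices v r q : Set ℕ) n) :
    IsLeast (dominantIndices v r (p * q) : Set ℕ) (m + n) := by
  refine ⟨add_mem_dominantIndices_mul hna hr hm.1 hn.1 fun i j hi hj hij ↦ ?_, fun k hk ↦ ?_⟩
  · have := hm.2 hi
    have := hn.2 hj
    omega
  · obtain ⟨i, hi, j, hj, rfl⟩ := Finset.mem_add.1 (dominantIndices_mul_subset hna hr hk)
    exact add_le_add (hm.2 hi) (hn.2 hj)

theorem isGreatest_dominantIndices_mul (hna : IsNonarchimedean v) (hr : 0 < r) {m n : ℕ}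
    (hm : IsGreatest (dominantIndices v r p : Set ℕ) m)
    (hn : IsGreatest (dominantIndices v r q : Set ℕ) n) :
    IsGreatest (dominantIndices v r (p * q) : Set ℕ) (m + n) := by
  refine ⟨add_mem_dominantIndices_mul hna hr hm.1 hn.1 fun i j hi hj hij ↦ ?_, fun k hk ↦ ?_⟩
  · have := hm.2 hi
    have := hn.2 hj
    omega
  · obtain ⟨i, hi, j, hj, rfl⟩ := Finset.mem_add.1 (dominantIndices_mul_subset hna hr hk)
    exact add_le_add (hm.2 hi) (hn.2 hj)

theorem dominantIndices_C {c : A} (hc : c ≠ 0) : dominantIndices v r (C c) = {0} := by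
  ext i
  rw [dominantIndices, support_C hc, gaussNorm_C, Finset.mem_filter, Finset.mem_singleton]
  exact and_iff_left_of_imp fun hi ↦ by rw [hi, coeff_C_zero, pow_zero, mul_one]

theorem gaussNorm_X_sub_C [Nontrivial A] (hr : 0 ≤ r) (b : A) :
    (X - C b).gaussNorm v r = max (v b) r := by
  refine le_antisymm ?_ (max_le ?_ ?_)
  · obtain ⟨i, hi⟩ := exists_eq_gaussNorm v r (X - C b)
    rw [hi]
    match i with
    | 0 => simp
    | 1 => simp
    | i + 2 => simp [coeff_X, hr]
  · have hzero := (X - C b).le_gaussNorm v hr 0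
    simpa using hzero
  · have hone := (X - C b).le_gaussNorm v hr 1
    simpa using hone

theorem mem_dominantIndices_X_sub_C_iff [Nontrivial A] (hr : 0 < r) {b : A} {i : ℕ} :
    i ∈ dominantIndices v r (X - C b) ↔ i = 0 ∧ r ≤ v b ∨ i = 1 ∧ v b ≤ r := by
  rw [mem_dominantIndices_iff hr (X_sub_C_ne_zero b), gaussNorm_X_sub_C hr.le]
  match i with
  | 0 => simp
  | 1 => simp
  | i + 2 => simp [coeff_X, (lt_max_of_lt_right hr).ne]

theorem isLeast_dominantIndices_X_sub_C [Nontrivial A] (hr : 0 < r) (b : A) :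
    IsLeast (dominantIndices v r (X - C b) : Set ℕ) (if v b < r then 1 else 0) := by
  simp only [IsLeast, mem_lowerBounds, Finset.mem_coe, mem_dominantIndices_X_sub_C_iff hr]
  grind

theorem isGreatest_dominantIndices_X_sub_C [Nontrivial A] (hr : 0 < r) (b : A) :
    IsGreatest (dominantIndices v r (X - C b) : Set ℕ) (if v b ≤ r then 1 else 0) := by
  simp only [IsGreatest, mem_upperBounds, Finset.mem_coe, mem_dominantIndices_X_sub_C_iff hr]
  grind

end DominantIndices

section Roots

variable {A : Type*} [CommRing A] {v : AbsoluteValue A ℝ} {r : ℝ}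

theorem isLeast_dominantIndices_prod_X_sub_C [Nontrivial A] (hna : IsNonarchimedean v)
    (hr : 0 < r) (s : Multiset A) :
    IsLeast (dominantIndices v r (s.map (X - C ·)).prod : Set ℕ) (s.countP (v · < r)) := by
  induction s using Multiset.induction_on with
  | empty =>
    rw [Multiset.map_zero, Multiset.prod_zero, Multiset.countP_zero, ← C_1,
      dominantIndices_C one_ne_zero, Finset.coe_singleton]
    exact isLeast_singleton
  | cons b s ih =>
    rw [Multiset.map_cons, Multiset.prod_cons, Multiset.countP_cons, add_comm]
    exact isLeast_dominantIndices_mul hna hr (isLeast_dominantIndices_X_sub_C hr b) ih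

theorem isGreatest_dominantIndices_prod_X_sub_C [Nontrivial A] (hna : IsNonarchimedean v)
    (hr : 0 < r) (s : Multiset A) :
    IsGreatest (dominantIndices v r (s.map (X - C ·)).prod : Set ℕ) (s.countP (v · ≤ r)) := by
  induction s using Multiset.induction_on with
  | empty =>
    rw [Multiset.map_zero, Multiset.prod_zero, Multiset.countP_zero, ← C_1,
      dominantIndices_C one_ne_zero, Finset.coe_singleton]
    exact isGreatest_singleton
  | cons b s ih =>
    rw [Multiset.map_cons, Multiset.prod_cons, Multiset.countP_cons, add_comm]
    exact isGreatest_dominantIndices_mul hna hr (isGreatest_dominantIndices_X_sub_C hr b) ih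

variable [IsDomain A] {f : A[X]}

theorem isLeast_dominantIndices_countP_roots (hna : IsNonarchimedean v) (hr : 0 < r)
    (hf : f ≠ 0) (hsplit : f.Splits) :
    IsLeast (dominantIndices v r f : Set ℕ) (f.roots.countP (v · < r)) := by
  have hC : IsLeast (dominantIndices v r (C f.leadingCoeff) : Set ℕ) 0 := by
    simp [dominantIndices_C (leadingCoeff_ne_zero.2 hf)]
  have h := isLeast_dominantIndices_mul hna hr hC
    (isLeast_dominantIndices_prod_X_sub_C hna hr f.roots)
  rwa [← hsplit.eq_prod_roots, zero_add] at h

theorem isGreatest_dominantIndices_countP_roots (hna : IsNonarchimedean v) (hr : 0 < r)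
    (hf : f ≠ 0) (hsplit : f.Splits) :
    IsGreatest (dominantIndices v r f : Set ℕ) (f.roots.countP (v · ≤ r)) := by
  have hC : IsGreatest (dominantIndices v r (C f.leadingCoeff) : Set ℕ) 0 := by
    simp [dominantIndices_C (leadingCoeff_ne_zero.2 hf)]
  have h := isGreatest_dominantIndices_mul hna hr hC
    (isGreatest_dominantIndices_prod_X_sub_C hna hr f.roots)
  rwa [← hsplit.eq_prod_roots, zero_add] at h

theorem roots_taylor (a : A) (f : A[X]) : (taylor a f).roots = f.roots.map (· - a) := by
  simpa [taylor_apply] using f.roots_comp_C_mul_X_add_C 1 a isUnit_one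

theorem countP_roots_taylor (P : A → Prop) [DecidablePred P] (a : A) (f : A[X]) :
    (taylor a f).roots.countP P = (f.roots.filter fun z ↦ P (z - a)).card := by
  rw [roots_taylor, Multiset.countP_map]

end Roots

namespace IsNAAbsValue

variable {A : Type*} [CommRing A] {v : A → ℝ}

/-- A nonarchimedean absolute value in the sense of `IsNAAbsValue`, bundled as Mathlib's
`AbsoluteValue`, for which the Gauss norm is known to be multiplicative. -/
def toAbsoluteValue (h : IsNAAbsValue v) : AbsoluteValue A ℝ where
  toFun := v
  map_mul' := h.2.2.1
  nonneg' := h.1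
  eq_zero' := h.2.1
  add_le' _ _ := IsNonarchimedean.add_le h.1 h.2.2.2

theorem isNonarchimedean (h : IsNAAbsValue v) : IsNonarchimedean h.toAbsoluteValue :=
  h.2.2.2

end IsNAAbsValue

theorem stmt17_general {A : Type*} [CommRing A] [IsDomain A] (abv : A → ℝ)
    (habv : IsNAAbsValue abv) (f : A[X]) (hf : f ≠ 0) (hsplit : f.Splits) (a : A) (R : ℝ)
    (hR : 0 < R) :
    IsGreatest {d : ℕ | abv ((taylor a f).coeff d) * R ^ d
        = ⨆ i : ℕ, abv ((taylor a f).coeff i) * R ^ i}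
      (f.roots.filter fun z ↦ abv (z - a) ≤ R).card ∧
    IsLeast {d : ℕ | abv ((taylor a f).coeff d) * R ^ d
        = ⨆ i : ℕ, abv ((taylor a f).coeff i) * R ^ i}
      (f.roots.filter fun z ↦ abv (z - a) < R).card := by
  have hna := habv.isNonarchimedean
  have htaylor : taylor a f ≠ 0 := (taylor_eq_zero a f).not.2 hf
  have hgreatest := isGreatest_dominantIndices_countP_roots hna hR htaylor (hsplit.taylor a)
  have hleast := isLeast_dominantIndices_countP_roots hna hR htaylor (hsplit.taylor a)
  rw [coe_dominantIndices_eq_setOf_eq_iSup hR htaylor, countP_roots_taylor] at hgreatest hleast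
  exact ⟨hgreatest, hleast⟩

open scoped Classical in
/-- Over an algebraically closed nonarchimedean field, the number of roots (with
multiplicity) of a nonzero polynomial `f` in the closed disk `D̄(a,R)` is the largest
index `d` with `|c_d| R^d = maxᵢ |cᵢ| Rⁱ` (Taylor coefficients about `a`), and the number
of roots in the open disk `D(a,R)` is the smallest such index. -/
theorem stmt17 {K : Type*} [Field K] [IsAlgClosed K] (abv : K → ℝ) (habv : IsNAAbsValue abv)
    (f : Polynomial K) (hf : f ≠ 0) (a : K) (R : ℝ) (hR : 0 < R) :
    (Multiset.card (f.roots.filter (fun z => abv (z - a) ≤ R)) =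
      sSup {d : ℕ | abv ((Polynomial.taylor a f).coeff d) * R ^ d
        = ⨆ i : ℕ, abv ((Polynomial.taylor a f).coeff i) * R ^ i}) ∧
    (Multiset.card (f.roots.filter (fun z => abv (z - a) < R)) =
      sInf {d : ℕ | abv ((Polynomial.taylor a f).coeff d) * R ^ d
        = ⨆ i : ℕ, abv ((Polynomial.taylor a f).coeff i) * R ^ i}) := by
  obtain ⟨hgreatest, hleast⟩ := stmt17_general abv habv f hf (IsAlgClosed.splits f) a R hR
  exact ⟨hgreatest.csSup_eq.symm, hleast.csInf_eq.symm⟩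
end
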